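/- Let p be an odd prime and let d, e, h, f be positive integers with h − d ≤ f < d < h < e, and let G = M₃(p,d,e,h,f). Consider the action of the automorphism group Aut(G) on the set of exact (p^d, p^e)-bicyclic pairs of G given by φ·(α, β) = (φ(α), φ(β)). Then the number of orbits of this action equals p^{d+h−2(f+1)}(p−1)². -/

import Mathlib

/-- Relators for the group `M₁(p,d,e,f) = ⟨a, b ∣ a^(p^e) = b^(p^d) = 1, b⁻¹ab = a^(1+p^f)⟩`,
where `a` is generator `0` and `b` is generator `1`. -/
def M1rels (p d e f : ℕ) : Set (FreeGroup (Fin 2)) :=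
  {FreeGroup.of 0 ^ p ^ e, FreeGroup.of 1 ^ p ^ d,
    (FreeGroup.of 1)⁻¹ * FreeGroup.of 0 * FreeGroup.of 1 * (FreeGroup.of 0 ^ (1 + p ^ f))⁻¹}

/-- The metacyclic group `M₁(p,d,e,f) = ⟨a, b ∣ a^(p^e) = b^(p^d) = 1, b⁻¹ab = a^(1+p^f)⟩`. -/
abbrev M1 (p d e f : ℕ) : Type := PresentedGroup (M1rels p d e f)

/-- The canonical generator `a` of `M₁(p,d,e,f)`. -/
def M1a (p d e f : ℕ) : M1 p d e f := PresentedGroup.of 0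

/-- The canonical generator `b` of `M₁(p,d,e,f)`. -/
def M1b (p d e f : ℕ) : M1 p d e f := PresentedGroup.of 1

/-- Relators for the group `M₂(p,d,e,f) = ⟨a, b ∣ a^(p^d) = b^(p^e) = 1, b⁻¹ab = a^(1+p^f)⟩`,
where `a` is generator `0` and `b` is generator `1`. -/
def M2rels (p d e f : ℕ) : Set (FreeGroup (Fin 2)) :=
  {FreeGroup.of 0 ^ p ^ d, FreeGroup.of 1 ^ p ^ e,
    (FreeGroup.of 1)⁻¹ * FreeGroup.of 0 * FreeGroup.of 1 * (FreeGroup.of 0 ^ (1 + p ^ f))⁻¹}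

/-- The metacyclic group `M₂(p,d,e,f) = ⟨a, b ∣ a^(p^d) = b^(p^e) = 1, b⁻¹ab = a^(1+p^f)⟩`. -/
abbrev M2 (p d e f : ℕ) : Type := PresentedGroup (M2rels p d e f)

/-- The canonical generator `a` of `M₂(p,d,e,f)`. -/
def M2a (p d e f : ℕ) : M2 p d e f := PresentedGroup.of 0

/-- The canonical generator `b` of `M₂(p,d,e,f)`. -/
def M2b (p d e f : ℕ) : M2 p d e f := PresentedGroup.of 1

/-- Relators for the group
`M₃(p,d,e,h,f) = ⟨a, b ∣ a^(p^h) = 1, b^(p^(d+e-h)) = a^(p^d), b⁻¹ab = a^(1+p^f)⟩`,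
where `a` is generator `0` and `b` is generator `1`. -/
def M3rels (p d e h f : ℕ) : Set (FreeGroup (Fin 2)) :=
  {FreeGroup.of 0 ^ p ^ h, FreeGroup.of 1 ^ p ^ (d + e - h) * (FreeGroup.of 0 ^ p ^ d)⁻¹,
    (FreeGroup.of 1)⁻¹ * FreeGroup.of 0 * FreeGroup.of 1 * (FreeGroup.of 0 ^ (1 + p ^ f))⁻¹}

/-- The non-split metacyclic group
`M₃(p,d,e,h,f) = ⟨a, b ∣ a^(p^h) = 1, b^(p^(d+e-h)) = a^(p^d), b⁻¹ab = a^(1+p^f)⟩`. -/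
abbrev M3 (p d e h f : ℕ) : Type := PresentedGroup (M3rels p d e h f)

/-- The canonical generator `a` of `M₃(p,d,e,h,f)`. -/
def M3a (p d e h f : ℕ) : M3 p d e h f := PresentedGroup.of 0

/-- The canonical generator `b` of `M₃(p,d,e,h,f)`. -/
def M3b (p d e h f : ℕ) : M3 p d e h f := PresentedGroup.of 1

/-- `(α, β)` is an exact `(m,n)`-bicyclic pair of `G`: `α` has order `m`, `β` has order `n`,
`⟨α⟩ ∩ ⟨β⟩ = 1`, and `G = ⟨α⟩⟨β⟩`. -/
def IsExactBicyclicPair {G : Type*} [Group G] (m n : ℕ) (α β : G) : Prop :=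
  orderOf α = m ∧ orderOf β = n ∧
    Subgroup.zpowers α ⊓ Subgroup.zpowers β = ⊥ ∧
    ∀ g : G, ∃ i j : ℤ, g = α ^ i * β ^ j

/-- The equivalence on exact `(m,n)`-bicyclic pairs of `G` induced by the componentwise
action of `Aut(G)`: two pairs are equivalent iff some automorphism maps one to the other.
The orbits of the action are exactly the equivalence classes. -/
def bicyclicPairSetoid (G : Type*) [Group G] (m n : ℕ) :
    Setoid {x : G × G // IsExactBicyclicPair m n x.1 x.2} where
  r x y := ∃ φ : MulAut G, φ x.1.1 = y.1.1 ∧ φ x.1.2 = y.1.2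
  iseqv := by
    refine ⟨fun x => ⟨MulEquiv.refl G, rfl, rfl⟩, ?_, ?_⟩
    · rintro x y ⟨φ, h1, h2⟩
      exact ⟨φ.symm, by rw [← h1]; exact φ.symm_apply_apply _,
        by rw [← h2]; exact φ.symm_apply_apply _⟩
    · rintro x y z ⟨φ, h1, h2⟩ ⟨ψ, h3, h4⟩
      exact ⟨φ.trans ψ, by simp [MulEquiv.trans_apply, h1, h3],
        by simp [MulEquiv.trans_apply, h2, h4]⟩

open Finset

/-!
An automorphism fixing both entries of an exact bicyclic pair is the identity, so `Aut(G)` acts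
freely on the pairs and the number of orbits is the number of pairs divided by `|Aut(G)|`.

In `G = M₃(p,d,e,h,f)` every element is `b ^ j * a ^ i`, and a power with exponent `p ^ t` large
enough to absorb the commutators is computed as in an abelian group. All cyclic subgroups of order
`p ^ e`, and also `⟨a⟩`, have the same subgroup of order `p`; hence `(α, β)` is a pair precisely
when `β` has order `p ^ e`, `α` has order `p ^ d` and `⟨α⟩ ∩ ⟨a⟩ = 1`, two independent conditions
that are read off from the exponents. Finally `|Aut(G)|` is the product of the numbers of images of
`b` under `Aut(G)` and of images of `a` under the automorphisms that fix `b`, which the defining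
relations turn into congruences.
-/

section GeometricSums

variable {R : Type*} [CommRing R]

theorem dvd_geom_sum_sub_natCast {x q : R} (hq : x ∣ q - 1) (m : ℕ) :
    x ∣ ∑ u ∈ range m, q ^ u - m := by
  have hsum : ∑ u ∈ range m, q ^ u - m = ∑ u ∈ range m, (q ^ u - 1) := by simp
  rw [hsum]
  exact dvd_sum fun u _ => hq.trans (sub_one_dvd_pow_sub_one q u)

theorem geom_sum_range_mul (q : R) (m k : ℕ) :
    ∑ u ∈ range (m * k), q ^ u = (∑ u ∈ range m, q ^ u) * ∑ u ∈ range k, (q ^ m) ^ u := by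
  induction k with
  | zero => simp
  | succ k ih =>
    rw [Nat.mul_succ, sum_range_add, ih, sum_range_succ, mul_add, ← pow_mul]
    simp only [pow_add, ← mul_sum]
    ring

theorem dvd_sum_range_id_of_odd {p : ℕ} (hp : Odd p) : p ∣ ∑ u ∈ range p, u := by
  refine hp.coprime_two_right.dvd_of_dvd_mul_right ?_
  rw [sum_range_id_mul_two]
  exact dvd_mul_right _ _

-- Each `q ^ u - 1` is `q - 1` times `1 + ⋯ + q ^ (u - 1)`, which is `u` modulo `p`.
theorem dvd_geom_sum_sub_of_odd {p g : ℕ} (hp : Odd p) (hg : g ≠ 0) {q : R}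
    (hq : (p : R) ^ g ∣ q - 1) : (p : R) ^ (g + 1) ∣ ∑ u ∈ range p, q ^ u - p := by
  have hsum : ∑ u ∈ range p, q ^ u - p = (q - 1) * ∑ u ∈ range p, ∑ v ∈ range u, q ^ v := by
    rw [mul_sum]
    simp [mul_geom_sum]
  have hmod : (p : R) ∣ ∑ u ∈ range p, (∑ v ∈ range u, q ^ v - u) :=
    dvd_sum fun u _ => dvd_geom_sum_sub_natCast ((dvd_pow_self _ hg).trans hq) u
  have hid : (p : R) ∣ ∑ u ∈ range p, (u : R) := by
    rw [← Nat.cast_sum]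
    exact Nat.cast_dvd_cast (dvd_sum_range_id_of_odd hp)
  rw [hsum, pow_succ]
  refine mul_dvd_mul hq ?_
  simpa [sum_sub_distrib] using hmod.add hid

theorem prime_pow_dvd_geom_sum_sub {p g : ℕ} (hp : Odd p) (hg : g ≠ 0) {q : R}
    (hq : (p : R) ^ g ∣ q - 1) (t : ℕ) :
    (p : R) ^ (t + g) ∣ ∑ u ∈ range (p ^ t), q ^ u - p ^ t := by
  induction t generalizing g q with
  | zero => simp
  | succ t ih =>
    have hbase := dvd_geom_sum_sub_of_odd hp hg hq
    have hp_dvd : (p : R) ∣ ∑ u ∈ range p, q ^ u :=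
      (dvd_sub_left dvd_rfl).1 ((dvd_pow_self _ g.succ_ne_zero).trans hbase)
    have hpow : (p : R) ^ (g + 1) ∣ q ^ p - 1 := by
      rw [← mul_geom_sum, pow_succ]
      exact mul_dvd_mul hq hp_dvd
    have hsplit : ∑ u ∈ range (p ^ (t + 1)), q ^ u - (p : R) ^ (t + 1) =
        (∑ u ∈ range p, q ^ u) * (∑ u ∈ range (p ^ t), (q ^ p) ^ u - p ^ t) +
          p ^ t * (∑ u ∈ range p, q ^ u - p) := by
      rw [pow_succ', geom_sum_range_mul]
      ring
    rw [hsplit, show t + 1 + g = t + (g + 1) by ring]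
    refine ((ih g.succ_ne_zero hpow).mul_left _).add ?_
    rw [pow_add]
    exact mul_dvd_mul_left _ hbase

theorem geom_sum_modEq {q M : ℕ} (hq : q ≡ 1 [MOD M]) (m : ℕ) :
    ∑ u ∈ range m, q ^ u ≡ m [MOD M] := by
  refine (Nat.modEq_iff_dvd.2 ?_).symm
  exact_mod_cast dvd_geom_sum_sub_natCast (Nat.modEq_iff_dvd.1 hq.symm) m

theorem geom_sum_prime_pow_modEq {p g q : ℕ} (hp : Odd p) (hg : g ≠ 0)
    (hq : q ≡ 1 [MOD p ^ g]) (t : ℕ) :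
    ∑ u ∈ range (p ^ t), q ^ u ≡ p ^ t [MOD p ^ (t + g)] := by
  have hq' : (p : ℤ) ^ g ∣ q - 1 := by exact_mod_cast Nat.modEq_iff_dvd.1 hq.symm
  refine (Nat.modEq_iff_dvd.2 ?_).symm
  push_cast
  exact prime_pow_dvd_geom_sum_sub hp hg hq' t

end GeometricSums

section PrimePowers

variable {p : ℕ}

theorem not_dvd_of_modEq_one {s i : ℕ} (hp : p.Prime) (hs : s ≠ 0) (hi : i ≡ 1 [MOD p ^ s]) :
    ¬p ∣ i := by
  rw [(hi.of_dvd (dvd_pow_self p hs)).dvd_iff dvd_rfl]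
  exact hp.not_dvd_one

theorem one_add_prime_pow_pow_modEq_iff {f s l m : ℕ} (hp : p.Prime) (hodd : Odd p) (hf : f ≠ 0) :
    (1 + p ^ f) ^ l ≡ (1 + p ^ f) ^ m [MOD p ^ (f + s)] ↔ l ≡ m [MOD p ^ s] := by
  have hf' : f + 2 ≤ p * f := by
    have hp2 : p ≠ 2 := by rintro rfl; exact absurd hodd (by decide)
    nlinarith [Nat.pos_of_ne_zero hf, hp.two_le.lt_of_ne' hp2]
  have horder : orderOf (1 + (p : ZMod (p ^ (s + f))) ^ f) = p ^ s := by
    simpa using ZMod.orderOf_one_add_mul_prime_pow hp f hf hf' 1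
      (by exact_mod_cast hp.one_lt.ne' ∘ Nat.dvd_one.1) s
  obtain ⟨u, hu⟩ : IsUnit (1 + (p : ZMod (p ^ (s + f))) ^ f) :=
    (orderOf_pos_iff.1 (horder ▸ pow_pos hp.pos s)).isUnit
  have hu_order : orderOf u = p ^ s := by rw [← orderOf_units, hu, horder]
  rw [← hu_order, ← pow_eq_pow_iff_modEq, add_comm f s, ← ZMod.natCast_eq_natCast_iff,
    Units.ext_iff]
  push_cast
  rw [hu]

theorem count_not_dvd_prime_pow (hp : p.Prime) {m : ℕ} (hm : 0 < m) :
    Nat.count (fun j => ¬p ∣ j) (p ^ m) = p ^ (m - 1) * (p - 1) := by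
  rw [← Nat.totient_prime_pow hp hm, Nat.totient, Nat.count_eq_card_filter_range]
  congr! 2 with j
  rw [Nat.coprime_pow_left_iff hm, hp.coprime_iff_not_dvd]

theorem count_modEq_pow (hp : 0 < p) {s t : ℕ} (hst : s ≤ t) (v : ℕ) :
    Nat.count (· ≡ v [MOD p ^ s]) (p ^ t) = p ^ (t - s) := by
  rw [Nat.count_modEq_card _ (pow_pos hp s), ← Nat.add_sub_cancel' hst, pow_add,
    Nat.mul_div_cancel_left _ (pow_pos hp s), Nat.mul_mod_right, Nat.add_sub_cancel_left]
  simp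

end PrimePowers

section NormalForm

variable {G : Type*} [Group G] {a b : G} {r : ℕ}

theorem pow_mul_pow_comm_of_mul_comm (hab : a * b = b * a ^ r) (i l : ℕ) :
    a ^ i * b ^ l = b ^ l * a ^ (i * r ^ l) := by
  have hconj (k : ℕ) : a ^ k * b = b * a ^ (k * r) := by
    have : SemiconjBy b (a ^ r) a := hab.symm
    rw [mul_comm k, pow_mul]
    exact (this.pow_right k).symm
  induction l with
  | zero => simp
  | succ l ih =>
    rw [pow_succ, ← mul_assoc, ih, mul_assoc, hconj, ← mul_assoc, mul_assoc i, pow_succ r]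

theorem normalForm_mul (hab : a * b = b * a ^ r) (j i l k : ℕ) :
    (b ^ j * a ^ i) * (b ^ l * a ^ k) = b ^ (j + l) * a ^ (i * r ^ l + k) := by
  rw [mul_assoc, ← mul_assoc (a ^ i), pow_mul_pow_comm_of_mul_comm hab, pow_add, pow_add]
  simp only [mul_assoc]

theorem normalForm_pow (hab : a * b = b * a ^ r) (j i m : ℕ) :
    (b ^ j * a ^ i) ^ m = b ^ (j * m) * a ^ (i * ∑ u ∈ range m, (r ^ j) ^ u) := by
  induction m with
  | zero => simp
  | succ m ih =>
    rw [pow_succ, ih, normalForm_mul hab, geom_sum_succ]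
    congr 2
    ring

theorem exists_eq_pow_mul_pow (hab : a * b = b * a ^ r) (ha : IsOfFinOrder a)
    (hb : IsOfFinOrder b) (hgen : Subgroup.closure {a, b} = ⊤) (g : G) :
    ∃ j i : ℕ, g = b ^ j * a ^ i := by
  have hmul_left (m : ℕ) {x : G} : (∃ j i : ℕ, x = b ^ j * a ^ i) →
      ∃ j i : ℕ, a ^ m * x = b ^ j * a ^ i := by
    rintro ⟨j, i, rfl⟩
    exact ⟨j, m * r ^ j + i, by simpa using normalForm_mul hab 0 m j i⟩
  have hmul_left' (m : ℕ) {x : G} : (∃ j i : ℕ, x = b ^ j * a ^ i) →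
      ∃ j i : ℕ, b ^ m * x = b ^ j * a ^ i := by
    rintro ⟨j, i, rfl⟩
    exact ⟨m + j, i, by rw [pow_add, mul_assoc]⟩
  obtain ⟨m, hm⟩ := ha.mem_powers_iff_mem_zpowers.2 (inv_mem (Subgroup.mem_zpowers a))
  obtain ⟨l, hl⟩ := hb.mem_powers_iff_mem_zpowers.2 (inv_mem (Subgroup.mem_zpowers b))
  refine Subgroup.closure_induction_left (p := fun x _ => ∃ j i : ℕ, x = b ^ j * a ^ i)
    ⟨0, 0, by simp⟩ ?_ ?_ (hgen ▸ Subgroup.mem_top g)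
  · rintro x (rfl | rfl) y - hy
    · simpa using hmul_left 1 hy
    · simpa using hmul_left' 1 hy
  · rintro x (rfl | rfl) y - hy
    · exact hm ▸ hmul_left m hy
    · exact hl ▸ hmul_left' l hy

end NormalForm

section PrimePowerOrder

variable {G : Type*} [Group G] {p m i : ℕ} {x : G} {H : Subgroup G}

theorem mem_of_pow_mem_of_coprime (hi : i.Coprime (orderOf x)) (hx : x ^ i ∈ H) : x ∈ H := by
  obtain ⟨m, hm⟩ := exists_pow_eq_self_of_coprime hi
  exact hm ▸ H.pow_mem hx m

-- `x ^ p ^ m` generates the unique minimal subgroup of `⟨x⟩`.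
theorem inf_zpowers_eq_bot_iff (hp : p.Prime) (hx : orderOf x = p ^ (m + 1)) :
    H ⊓ Subgroup.zpowers x = ⊥ ↔ x ^ p ^ m ∉ H := by
  have hne : x ^ p ^ m ≠ 1 :=
    pow_ne_one_of_lt_orderOf (pow_pos hp.pos m).ne'
      (hx ▸ Nat.pow_lt_pow_right hp.one_lt m.lt_succ_self)
  refine ⟨fun h hmem => hne ?_, fun h => ?_⟩
  · rw [← Subgroup.mem_bot, ← h]
    exact ⟨hmem, Subgroup.npow_mem_zpowers x _⟩
  rw [Subgroup.eq_bot_iff_forall]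
  rintro y ⟨hyH, hyx⟩
  have hfin : IsOfFinOrder x := orderOf_pos_iff.1 (hx ▸ pow_pos hp.pos _)
  obtain ⟨k, rfl⟩ := hfin.mem_powers_iff_mem_zpowers.2 hyx
  by_contra hy
  have hk : k ≠ 0 := by rintro rfl; exact hy (pow_zero x)
  obtain ⟨s, k', hk', rfl⟩ := Nat.exists_eq_pow_mul_and_not_dvd hk p hp.ne_one
  have hs : s ≤ m := by
    by_contra! hs
    refine hy (orderOf_dvd_iff_pow_eq_one.1 ?_)
    exact hx ▸ (pow_dvd_pow p hs).mul_right k'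
  have hcop : k'.Coprime (orderOf (x ^ p ^ s)) :=
    Nat.Coprime.coprime_dvd_right (orderOf_pow_dvd _)
      (hx ▸ (hp.coprime_pow_of_not_dvd hk'))
  have hmem : x ^ p ^ s ∈ H := mem_of_pow_mem_of_coprime hcop (by simpa [← pow_mul] using hyH)
  refine h ?_
  rw [← Nat.add_sub_cancel' hs, pow_add, pow_mul]
  exact H.pow_mem hmem _

theorem orderOf_eq_prime_pow_iff_of_inf_eq_bot (hp : p.Prime) :
    orderOf x = p ^ (m + 1) ∧ H ⊓ Subgroup.zpowers x = ⊥ ↔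
      x ^ p ^ (m + 1) = 1 ∧ x ^ p ^ m ∉ H := by
  have := Fact.mk hp
  constructor
  · rintro ⟨hx, hH⟩
    exact ⟨hx ▸ pow_orderOf_eq_one x, (inf_zpowers_eq_bot_iff hp hx).1 hH⟩
  · rintro ⟨hx, hH⟩
    have horder : orderOf x = p ^ (m + 1) :=
      orderOf_eq_prime_pow (fun h => hH (h ▸ H.one_mem)) hx
    exact ⟨horder, (inf_zpowers_eq_bot_iff hp horder).2 hH⟩

end PrimePowerOrder

section BicyclicPairs

variable {G : Type*} [Group G] {m n : ℕ} {α β : G}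

theorem isExactBicyclicPair_iff_of_card_eq [Finite G] (hcard : Nat.card G = m * n) :
    IsExactBicyclicPair m n α β ↔ orderOf α = m ∧ orderOf β = n ∧
      Subgroup.zpowers α ⊓ Subgroup.zpowers β = ⊥ := by
  refine ⟨fun h => ⟨h.1, h.2.1, h.2.2.1⟩, fun ⟨hα, hβ, hinf⟩ => ⟨hα, hβ, hinf, fun g => ?_⟩⟩
  have hcompl : (Subgroup.zpowers α).IsComplement' (Subgroup.zpowers β) :=
    Subgroup.isComplement'_of_card_mul_and_disjoint
      (by rw [Nat.card_zpowers, Nat.card_zpowers, hα, hβ, hcard]) (disjoint_iff.2 hinf)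
  obtain ⟨⟨⟨_, i, rfl⟩, ⟨_, j, rfl⟩⟩, hg⟩ := hcompl.2 g
  exact ⟨i, j, hg.symm⟩

theorem IsExactBicyclicPair.map (h : IsExactBicyclicPair m n α β) (φ : MulAut G) :
    IsExactBicyclicPair m n (φ α) (φ β) := by
  obtain ⟨hα, hβ, hinf, hgen⟩ := h
  refine ⟨by rw [MulEquiv.orderOf_eq, hα], by rw [MulEquiv.orderOf_eq, hβ], ?_, fun g => ?_⟩
  · have hmap (x : G) : Subgroup.zpowers (φ x) = (Subgroup.zpowers x).map φ.toMonoidHom :=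
      (MonoidHom.map_zpowers φ.toMonoidHom x).symm
    rw [hmap, hmap, ← Subgroup.map_inf _ _ _ φ.injective, hinf, Subgroup.map_bot]
  · obtain ⟨i, j, hij⟩ := hgen (φ.symm g)
    refine ⟨i, j, ?_⟩
    rw [← map_zpow, ← map_zpow, ← map_mul, ← hij, MulEquiv.apply_symm_apply]

theorem IsExactBicyclicPair.mulAut_ext (h : IsExactBicyclicPair m n α β)
    {φ ψ : MulAut G} (hα : φ α = ψ α) (hβ : φ β = ψ β) : φ = ψ := by
  ext g
  obtain ⟨i, j, rfl⟩ := h.2.2.2 g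
  simp only [map_mul, map_zpow, hα, hβ]

/-- The componentwise action of `Aut(G)` on the exact bicyclic pairs of `G`. -/
instance : MulAction (MulAut G) {x : G × G // IsExactBicyclicPair m n x.1 x.2} where
  smul φ x := ⟨(φ x.1.1, φ x.1.2), x.2.map φ⟩
  one_smul _ := rfl
  mul_smul _ _ _ := rfl

theorem bicyclicPairSetoid_eq_orbitRel (G : Type*) [Group G] (m n : ℕ) :
    bicyclicPairSetoid G m n =
      MulAction.orbitRel (MulAut G) {x : G × G // IsExactBicyclicPair m n x.1 x.2} := by
  ext x y
  rw [Setoid.comm', MulAction.orbitRel_apply]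
  exact exists_congr fun φ => by rw [Subtype.ext_iff, Prod.ext_iff]; rfl

theorem IsExactBicyclicPair.stabilizer_eq_bot
    (x : {x : G × G // IsExactBicyclicPair m n x.1 x.2}) :
    MulAction.stabilizer (MulAut G) x = ⊥ := by
  refine (Subgroup.eq_bot_iff_forall _).2 fun φ hφ => ?_
  have hfix := Prod.ext_iff.1 (Subtype.ext_iff.1 (MulAction.mem_stabilizer_iff.1 hφ))
  exact x.2.mulAut_ext hfix.1 hfix.2

theorem card_isExactBicyclicPair_eq_mul (G : Type*) [Group G] (m n : ℕ) :
    Nat.card {x : G × G // IsExactBicyclicPair m n x.1 x.2} =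
      Nat.card (Quotient (bicyclicPairSetoid G m n)) * Nat.card (MulAut G) := by
  rw [bicyclicPairSetoid_eq_orbitRel, ← Nat.card_prod]
  exact Nat.card_congr
    (MulAction.selfEquivOrbitsQuotientProd IsExactBicyclicPair.stabilizer_eq_bot)

end BicyclicPairs

theorem card_mulAut_eq_mul {G : Type*} [Group G] {a b : G}
    (hgen : Subgroup.closure {a, b} = ⊤) :
    Nat.card (MulAut G) = Nat.card {y // ∃ φ : MulAut G, φ b = y} *
      Nat.card {x // ∃ φ : MulAut G, φ b = b ∧ φ a = x} := by
  let evalLeft : MulAction.stabilizer (MulAut G) b → {x // ∃ φ : MulAut G, φ b = b ∧ φ a = x} :=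
    fun φ => ⟨φ.1 a, φ.1, φ.2, rfl⟩
  have hinj : Function.Injective evalLeft := by
    rintro ⟨φ, hφ⟩ ⟨ψ, hψ⟩ heq
    have hagree : Set.EqOn φ.toMonoidHom ψ.toMonoidHom {a, b} := by
      rintro x (rfl | rfl)
      · exact congrArg Subtype.val heq
      · exact Eq.trans hφ hψ.symm
    exact Subtype.ext (MulEquiv.toMonoidHom_injective (MonoidHom.eq_of_eqOn_dense hgen hagree))
  have hsurj : Function.Surjective evalLeft := by
    rintro ⟨_, φ, hφ, rfl⟩
    exact ⟨⟨φ, hφ⟩, rfl⟩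
  rw [← Nat.card_congr (Equiv.ofBijective evalLeft ⟨hinj, hsurj⟩),
    ← Nat.card_congr (MulAction.orbitProdStabilizerEquivGroup (MulAut G) b), Nat.card_prod]
  rfl

section AffineModel

variable {R : Type*} [CommRing R]

/-- The permutation `x ↦ q * x + 1` of a commutative ring. Together with the translations it
provides a faithful enough model of `M₃(p,d,e,h,f)` to compute the order of the generator `a`. -/
def affinePerm (q : Rˣ) : Equiv.Perm R :=
  (Units.mulLeft q).trans (Equiv.addRight 1)

theorem affinePerm_apply (q : Rˣ) (x : R) : affinePerm q x = q * x + 1 := rfl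

theorem affinePerm_pow_apply (q : Rˣ) (m : ℕ) (x : R) :
    (affinePerm q ^ m) x = (q : R) ^ m * x + ∑ u ∈ range m, (q : R) ^ u := by
  induction m with
  | zero => simp
  | succ m ih =>
    rw [pow_succ', Equiv.Perm.mul_apply, ih, geom_sum_succ, affinePerm_apply]
    ring

theorem affinePerm_pow_prime_pow {p g t : ℕ} (hp : Odd p) (hg : g ≠ 0) {q : Rˣ}
    (hq : (p : R) ^ g ∣ q - 1) (hR : (p : R) ^ (t + g) = 0) :
    affinePerm q ^ p ^ t = Equiv.addRight ((p : R) ^ t) := by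
  have hsum : ∑ u ∈ range (p ^ t), (q : R) ^ u = p ^ t :=
    sub_eq_zero.1 (zero_dvd_iff.1 (hR ▸ prime_pow_dvd_geom_sum_sub hp hg hq t))
  have hpow : (q : R) ^ p ^ t = 1 := by
    rw [← sub_eq_zero, ← zero_dvd_iff, ← hR, ← mul_geom_sum, hsum, add_comm t, pow_add]
    exact mul_dvd_mul_right hq _
  ext x
  rw [affinePerm_pow_apply, hsum, hpow, one_mul, Equiv.coe_addRight]

theorem addRight_pow {A : Type*} [AddGroup A] (t : A) (m : ℕ) :
    (Equiv.addRight t : Equiv.Perm A) ^ m = Equiv.addRight (m • t) := by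
  induction m with
  | zero => ext x; simp
  | succ m ih => ext x; rw [pow_succ, ih, Equiv.Perm.mul_apply]; simp [succ_nsmul', add_assoc]

theorem orderOf_addRight {A : Type*} [AddGroup A] (t : A) :
    orderOf (Equiv.addRight t : Equiv.Perm A) = addOrderOf t := by
  refine Nat.dvd_right_iff_eq.1 fun m => ?_
  rw [orderOf_dvd_iff_pow_eq_one, addOrderOf_dvd_iff_nsmul_eq_zero, addRight_pow]
  refine ⟨fun h => by simpa using Equiv.congr_fun h 0, fun h => ?_⟩
  ext x
  simp [h]

theorem addRight_mul_affinePerm_inv {q : Rˣ} {m : ℕ} (hq : (q : R) = m) (t : R) :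
    Equiv.addRight t * affinePerm q⁻¹ = affinePerm q⁻¹ * Equiv.addRight t ^ m := by
  ext x
  simp only [addRight_pow, Equiv.Perm.mul_apply, affinePerm_apply, Equiv.coe_addRight,
    nsmul_eq_mul, ← hq, mul_add, Units.inv_mul_cancel_left]
  ring

theorem exists_perm_orderOf_eq {p f d c n : ℕ} (hp : Odd p) (hf : f ≠ 0) (hcf : c ≤ f)
    (hdn : d ≤ n) : ∃ x y : Equiv.Perm (ZMod (p ^ (n + c))), orderOf x = p ^ (d + c) ∧
      y ^ p ^ n = x ^ p ^ d ∧ x * y = y * x ^ (1 + p ^ f) := by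
  have hzero {m : ℕ} (hm : n + c ≤ m) : (p : ZMod (p ^ (n + c))) ^ m = 0 := by
    exact_mod_cast (ZMod.natCast_eq_zero_iff _ _).2 (pow_dvd_pow p hm)
  obtain ⟨q, hq⟩ : IsUnit ((1 + p ^ f : ℕ) : ZMod (p ^ (n + c))) := by
    push_cast
    refine IsNilpotent.isUnit_one_add ⟨n + c, ?_⟩
    rw [← pow_mul]
    exact hzero (Nat.le_mul_of_pos_left _ (Nat.pos_of_ne_zero hf))
  refine ⟨Equiv.addRight ((p ^ (n - d) : ℕ) : ZMod (p ^ (n + c))), affinePerm q⁻¹, ?_, ?_,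
    addRight_mul_affinePerm_inv hq _⟩
  · rw [orderOf_addRight, ZMod.addOrderOf_coe _ (pow_pos hp.pos _).ne',
      Nat.gcd_eq_right (pow_dvd_pow p (by lia)), Nat.pow_div (by lia) hp.pos]
    congr 1
    lia
  · have hqinv : (p : ZMod (p ^ (n + c))) ^ f ∣ (q⁻¹ : (ZMod (p ^ (n + c)))ˣ) - 1 :=
      ⟨-(q⁻¹ : (ZMod (p ^ (n + c)))ˣ), by
        have := q.mul_inv
        rw [hq] at this
        push_cast at this
        linear_combination this⟩
    rw [affinePerm_pow_prime_pow hp hf hqinv (hzero (by lia)), addRight_pow, nsmul_eq_mul]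
    congr 1
    push_cast
    rw [← pow_add, Nat.add_sub_cancel' hdn]

end AffineModel

section Presentation

variable (p d e h f : ℕ)

theorem M3a_pow : M3a p d e h f ^ p ^ h = 1 :=
  PresentedGroup.one_of_mem (rels := M3rels p d e h f) (x := FreeGroup.of 0 ^ p ^ h)
    (by simp [M3rels])

theorem M3b_pow : M3b p d e h f ^ p ^ (d + e - h) = M3a p d e h f ^ p ^ d :=
  mul_inv_eq_one.1 (PresentedGroup.one_of_mem (rels := M3rels p d e h f)
    (x := FreeGroup.of 1 ^ p ^ (d + e - h) * (FreeGroup.of 0 ^ p ^ d)⁻¹) (by simp [M3rels]))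

theorem M3a_mul_M3b :
    M3a p d e h f * M3b p d e h f = M3b p d e h f * M3a p d e h f ^ (1 + p ^ f) := by
  have hrel : (M3b p d e h f)⁻¹ * M3a p d e h f * M3b p d e h f *
      (M3a p d e h f ^ (1 + p ^ f))⁻¹ = 1 :=
    PresentedGroup.one_of_mem (rels := M3rels p d e h f)
      (x := (FreeGroup.of 1)⁻¹ * FreeGroup.of 0 * FreeGroup.of 1 *
        (FreeGroup.of 0 ^ (1 + p ^ f))⁻¹) (by simp [M3rels])
  rw [mul_inv_eq_one, mul_assoc] at hrel
  exact inv_mul_eq_iff_eq_mul.1 hrel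

theorem closure_M3a_M3b : Subgroup.closure {M3a p d e h f, M3b p d e h f} = ⊤ := by
  rw [← PresentedGroup.closure_range_of (M3rels p d e h f)]
  congr 1
  ext g
  simp [Fin.exists_fin_two, M3a, M3b, eq_comm]

variable {p d e h f}

theorem M3_exists_hom {K : Type*} [Group K] (x y : K) (hx : x ^ p ^ h = 1)
    (hy : y ^ p ^ (d + e - h) = x ^ p ^ d) (hxy : x * y = y * x ^ (1 + p ^ f)) :
    ∃ φ : M3 p d e h f →* K, φ (M3a p d e h f) = x ∧ φ (M3b p d e h f) = y := by
  have hrel : ∀ s ∈ M3rels p d e h f, FreeGroup.lift ![x, y] s = 1 := by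
    rintro s (rfl | rfl | rfl)
    · simpa using hx
    · simpa [mul_inv_eq_one] using hy
    · have hconj : y⁻¹ * x * y * (x ^ (1 + p ^ f))⁻¹ = 1 := by
        rw [mul_inv_eq_one, mul_assoc, hxy, inv_mul_cancel_left]
      simpa using hconj
  exact ⟨PresentedGroup.toGroup hrel, PresentedGroup.toGroup.of hrel,
    PresentedGroup.toGroup.of hrel⟩

theorem orderOf_M3a (hp : Odd p) (hf : f ≠ 0) (hhd : h - d ≤ f) (hdh : d ≤ h) (hhe : h ≤ e) :
    orderOf (M3a p d e h f) = p ^ h := by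
  refine Nat.dvd_antisymm (orderOf_dvd_of_pow_eq_one (M3a_pow p d e h f)) ?_
  obtain ⟨x, y, hx, hy, hxy⟩ := exists_perm_orderOf_eq (d := d) (n := d + e - h) hp hf hhd (by lia)
  rw [Nat.add_sub_cancel' hdh] at hx
  obtain ⟨φ, hφ, -⟩ := M3_exists_hom x y (hx ▸ pow_orderOf_eq_one x) hy hxy
  rw [← hx, ← hφ]
  exact orderOf_map_dvd φ _

theorem modEq_of_M3b_pow_mul_M3a_pow_eq {j i j' i' : ℕ}
    (hij : M3b p d e h f ^ j * M3a p d e h f ^ i = M3b p d e h f ^ j' * M3a p d e h f ^ i') :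
    j ≡ j' [MOD p ^ (d + e - h)] := by
  obtain ⟨φ, hφa, hφb⟩ := M3_exists_hom (p := p) (d := d) (e := e) (h := h) (f := f)
    (1 : Multiplicative (ZMod (p ^ (d + e - h)))) (Multiplicative.ofAdd 1) (by simp)
    (by rw [← ofAdd_nsmul]; simp) (by simp)
  have hφ := congrArg φ hij
  simp only [map_mul, map_pow, hφa, hφb, one_pow, mul_one, ← ofAdd_nsmul, nsmul_one] at hφ
  exact (ZMod.natCast_eq_natCast_iff _ _ _).1 (Multiplicative.ofAdd.injective hφ)

end Presentation

/-- `a` and `b` generate the group `G` with the presentation of `M₃(p, d, n + c, d + c, f)`. In the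
parameters `c = h - d` and `n = d + e - h` the constraints of the paper become `0 < c ≤ f < d < n`,
without truncated subtractions. -/
structure IsM3Pair {G : Type*} [Group G] (p f d c n : ℕ) (a b : G) : Prop where
  prime : p.Prime
  odd : Odd p
  c_pos : 0 < c
  c_le_f : c ≤ f
  f_lt_d : f < d
  d_lt_n : d < n
  orderOf_left : orderOf a = p ^ (d + c)
  pow_right : b ^ p ^ n = a ^ p ^ d
  mul_eq_mul_pow : a * b = b * a ^ (1 + p ^ f)
  closure_eq_top : Subgroup.closure {a, b} = ⊤
  modEq_of_eq : ∀ {j i j' i' : ℕ}, b ^ j * a ^ i = b ^ j' * a ^ i' → j ≡ j' [MOD p ^ n]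
  exists_hom : ∀ x y : G, x ^ p ^ (d + c) = 1 → y ^ p ^ n = x ^ p ^ d →
    x * y = y * x ^ (1 + p ^ f) → ∃ φ : G →* G, φ a = x ∧ φ b = y

theorem isM3Pair_M3 {p d e h f : ℕ} (hp : p.Prime) (hodd : Odd p) (hhd : h - d ≤ f) (hfd : f < d)
    (hdh : d < h) (hhe : h < e) :
    IsM3Pair p f d (h - d) (d + e - h) (M3a p d e h f) (M3b p d e h f) := by
  have hd : d + (h - d) = h := by lia
  refine ⟨hp, hodd, by lia, hhd, hfd, by lia, ?_, M3b_pow p d e h f, M3a_mul_M3b p d e h f,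
    closure_M3a_M3b p d e h f, modEq_of_M3b_pow_mul_M3a_pow_eq, ?_⟩
  · rw [hd, orderOf_M3a hodd (by lia) hhd hdh.le hhe.le]
  · rw [hd]
    exact M3_exists_hom

namespace IsM3Pair

variable {G : Type*} [Group G] {p f d c n : ℕ} {a b : G}

theorem f_ne_zero (h : IsM3Pair p f d c n a b) : f ≠ 0 :=
  (h.c_pos.trans_le h.c_le_f).ne'

theorem pow_eq_pow_iff (h : IsM3Pair p f d c n a b) {i i' : ℕ} :
    a ^ i = a ^ i' ↔ i ≡ i' [MOD p ^ (d + c)] := by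
  rw [pow_eq_pow_iff_modEq, h.orderOf_left]

theorem pow_eq_one_iff (h : IsM3Pair p f d c n a b) {i : ℕ} : a ^ i = 1 ↔ p ^ (d + c) ∣ i := by
  rw [← orderOf_dvd_iff_pow_eq_one, h.orderOf_left]

theorem pow_mul_right (h : IsM3Pair p f d c n a b) (t : ℕ) : b ^ (p ^ n * t) = a ^ (p ^ d * t) := by
  rw [pow_mul, h.pow_right, ← pow_mul]

theorem isOfFinOrder_left (h : IsM3Pair p f d c n a b) : IsOfFinOrder a :=
  orderOf_pos_iff.1 (h.orderOf_left ▸ pow_pos h.prime.pos _)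

theorem exists_eq (h : IsM3Pair p f d c n a b) (g : G) : ∃ j i : ℕ, g = b ^ j * a ^ i := by
  have hb : IsOfFinOrder b := by
    refine IsOfFinOrder.of_pow (n := p ^ n) ?_ (pow_pos h.prime.pos n).ne'
    exact h.pow_right ▸ h.isOfFinOrder_left.pow
  exact exists_eq_pow_mul_pow h.mul_eq_mul_pow h.isOfFinOrder_left hb h.closure_eq_top g

theorem exists_lt_and_eq (h : IsM3Pair p f d c n a b) (g : G) :
    ∃ j < p ^ n, ∃ i < p ^ (d + c), g = b ^ j * a ^ i := by
  obtain ⟨j, i, rfl⟩ := h.exists_eq g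
  refine ⟨j % p ^ n, Nat.mod_lt _ (pow_pos h.prime.pos _),
    (p ^ d * (j / p ^ n) + i) % p ^ (d + c), Nat.mod_lt _ (pow_pos h.prime.pos _), ?_⟩
  conv_lhs => rw [← Nat.mod_add_div j (p ^ n), pow_add, h.pow_mul_right, mul_assoc, ← pow_add]
  rw [h.pow_eq_pow_iff.2 (Nat.mod_modEq _ _)]

theorem eq_of_lt_of_eq (h : IsM3Pair p f d c n a b) {j i j' i' : ℕ} (hj : j < p ^ n)
    (hj' : j' < p ^ n) (hi : i < p ^ (d + c)) (hi' : i' < p ^ (d + c))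
    (heq : b ^ j * a ^ i = b ^ j' * a ^ i') : j = j' ∧ i = i' := by
  obtain rfl := (h.modEq_of_eq heq).eq_of_lt_of_lt hj hj'
  exact ⟨rfl, (h.pow_eq_pow_iff.1 (mul_left_cancel heq)).eq_of_lt_of_lt hi hi'⟩

theorem normalForm_mem_zpowers_iff (h : IsM3Pair p f d c n a b) {j i : ℕ} :
    b ^ j * a ^ i ∈ Subgroup.zpowers a ↔ p ^ n ∣ j := by
  refine ⟨fun hmem => ?_, ?_⟩
  · obtain ⟨k, hk⟩ := h.isOfFinOrder_left.mem_powers_iff_mem_zpowers.2 hmem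
    refine (Nat.modEq_zero_iff_dvd.1 (h.modEq_of_eq (i := i) (i' := k) ?_))
    simpa using hk.symm
  · rintro ⟨t, rfl⟩
    rw [h.pow_mul_right, ← pow_add]
    exact Subgroup.npow_mem_zpowers a _

theorem normalForm_pow_prime_pow (h : IsM3Pair p f d c n a b) {j s t : ℕ} (hj : p ^ s ∣ j)
    (ht : d + c ≤ t + (f + s)) (i : ℕ) :
    (b ^ j * a ^ i) ^ p ^ t = b ^ (j * p ^ t) * a ^ (i * p ^ t) := by
  have hone : (1 + p ^ f) ^ j ≡ 1 [MOD p ^ (f + s)] := by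
    simpa using (one_add_prime_pow_pow_modEq_iff h.prime h.odd h.f_ne_zero).2
      (Nat.modEq_zero_iff_dvd.2 hj)
  have hsum := geom_sum_prime_pow_modEq h.odd (by have := h.f_ne_zero; lia) hone t
  rw [normalForm_pow h.mul_eq_mul_pow,
      h.pow_eq_pow_iff.2 ((hsum.of_dvd (pow_dvd_pow p ht)).mul_left i)]

theorem normalForm_pow_prime_pow_add (h : IsM3Pair p f d c n a b) {s : ℕ} (hs : d + c ≤ n + s)
    (l k : ℕ) : (b ^ l * a ^ k) ^ p ^ (n + s) = a ^ (l * p ^ (d + s)) := by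
  rw [h.normalForm_pow_prime_pow (s := 0) (by simp) (by lia),
    h.pow_eq_one_iff.2 ((pow_dvd_pow p hs).mul_left k), mul_one, pow_add, mul_left_comm,
    h.pow_mul_right, pow_add, mul_left_comm]

theorem pow_prime_pow_eq_one (h : IsM3Pair p f d c n a b) (g : G) : g ^ p ^ (n + c) = 1 := by
  obtain ⟨l, k, rfl⟩ := h.exists_eq g
  have hn := h.d_lt_n
  rw [h.normalForm_pow_prime_pow_add (by lia), h.pow_eq_one_iff]
  exact dvd_mul_left _ _

theorem normalForm_pow_prime_pow_eq_one_iff (h : IsM3Pair p f d c n a b) {j i : ℕ} :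
    (b ^ j * a ^ i) ^ p ^ d = 1 ↔ ∃ j', j = p ^ (n - d) * j' ∧ p ^ c ∣ j' + i := by
  have hn : p ^ n = p ^ (n - d) * p ^ d := by rw [← pow_add, Nat.sub_add_cancel h.d_lt_n.le]
  have hpow (j' : ℕ) : (b ^ (p ^ (n - d) * j') * a ^ i) ^ p ^ d = a ^ (p ^ d * (j' + i)) := by
    have hc := h.c_le_f
    rw [h.normalForm_pow_prime_pow (s := 0) (by simp) (by lia), mul_right_comm, ← hn,
      h.pow_mul_right, mul_comm i, ← pow_add, mul_add]
  have hone (j' : ℕ) : (b ^ (p ^ (n - d) * j') * a ^ i) ^ p ^ d = 1 ↔ p ^ c ∣ j' + i := by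
    rw [hpow, h.pow_eq_one_iff, pow_add, Nat.mul_dvd_mul_iff_left (pow_pos h.prime.pos d)]
  refine ⟨fun heq => ?_, by rintro ⟨j', rfl, hdvd⟩; exact (hone j').2 hdvd⟩
  have hdvd : p ^ n ∣ j * p ^ d := by
    rw [← h.normalForm_mem_zpowers_iff, ← normalForm_pow h.mul_eq_mul_pow j i, heq]
    exact one_mem _
  obtain ⟨j', rfl⟩ := Nat.dvd_of_mul_dvd_mul_right (pow_pos h.prime.pos d) (hn ▸ hdvd)
  exact ⟨j', rfl, (hone j').1 heq⟩

theorem orderOf_normalForm_eq_iff (h : IsM3Pair p f d c n a b) {l k : ℕ} :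
    orderOf (b ^ l * a ^ k) = p ^ (n + c) ↔ ¬p ∣ l := by
  have := Fact.mk h.prime
  obtain ⟨hn, hc⟩ := h.d_lt_n, h.c_pos
  have hpow : (b ^ l * a ^ k) ^ p ^ (n + (c - 1)) = 1 ↔ p ∣ l := by
    rw [h.normalForm_pow_prime_pow_add (by lia), h.pow_eq_one_iff,
      show d + c = d + (c - 1) + 1 by lia, pow_succ', Nat.mul_dvd_mul_iff_right
      (pow_pos h.prime.pos _)]
  have hexp := h.pow_prime_pow_eq_one (b ^ l * a ^ k)
  rw [← hpow]
  rw [show n + c = n + (c - 1) + 1 by lia] at hexp ⊢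
  refine ⟨fun horder hone => ?_, fun hne => orderOf_eq_prime_pow hne hexp⟩
  have hle := Nat.le_of_dvd (pow_pos h.prime.pos _) (horder ▸ orderOf_dvd_of_pow_eq_one hone)
  exact hle.not_gt (Nat.pow_lt_pow_right h.prime.one_lt (Nat.lt_succ_self _))

-- `⟨a⟩` and every cyclic subgroup of order `p ^ (n + c)` contain the same subgroup of order `p`.
theorem inf_zpowers_normalForm_eq_bot_iff (h : IsM3Pair p f d c n a b) {H : Subgroup G} {l k : ℕ}
    (hl : ¬p ∣ l) :
    H ⊓ Subgroup.zpowers (b ^ l * a ^ k) = ⊥ ↔ H ⊓ Subgroup.zpowers a = ⊥ := by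
  obtain ⟨hn, hc⟩ := h.d_lt_n, h.c_pos
  have hsocle : (b ^ l * a ^ k) ^ p ^ (n + (c - 1)) = (a ^ p ^ (d + (c - 1))) ^ l := by
    rw [h.normalForm_pow_prime_pow_add (by lia), mul_comm, pow_mul]
  have hcop : l.Coprime (orderOf (a ^ p ^ (d + (c - 1)))) :=
    Nat.Coprime.coprime_dvd_right (orderOf_pow_dvd _)
      (h.orderOf_left ▸ (h.prime.coprime_pow_of_not_dvd hl))
  rw [inf_zpowers_eq_bot_iff (m := n + (c - 1)) h.prime
      ((h.orderOf_normalForm_eq_iff.2 hl).trans (by congr 1; lia)),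
    inf_zpowers_eq_bot_iff (m := d + (c - 1)) h.prime (h.orderOf_left.trans (by congr 1; lia)),
    hsocle, not_iff_not]
  exact ⟨mem_of_pow_mem_of_coprime hcop, fun hmem => H.pow_mem hmem l⟩

theorem orderOf_eq_and_inf_zpowers_eq_bot_iff (h : IsM3Pair p f d c n a b) {j i : ℕ} :
    orderOf (b ^ j * a ^ i) = p ^ d ∧
        Subgroup.zpowers (b ^ j * a ^ i) ⊓ Subgroup.zpowers a = ⊥ ↔
      ∃ j', j = p ^ (n - d) * j' ∧ ¬p ∣ j' ∧ p ^ c ∣ j' + i := by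
  obtain ⟨m, rfl⟩ := Nat.exists_eq_add_one_of_ne_zero (Nat.ne_zero_of_lt h.f_lt_d)
  have hnotMem (j' : ℕ) :
      (b ^ (p ^ (n - (m + 1)) * j') * a ^ i) ^ p ^ m ∉ Subgroup.zpowers a ↔ ¬p ∣ j' := by
    have hn : p ^ n = p ^ (n - (m + 1)) * p ^ m * p := by
      rw [← pow_add, ← pow_succ]
      congr 1
      have := h.d_lt_n
      lia
    rw [normalForm_pow h.mul_eq_mul_pow, h.normalForm_mem_zpowers_iff, hn, mul_right_comm _ j',
      Nat.mul_dvd_mul_iff_left (mul_pos (pow_pos h.prime.pos _) (pow_pos h.prime.pos m))]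
  rw [inf_comm, orderOf_eq_prime_pow_iff_of_inf_eq_bot h.prime,
    h.normalForm_pow_prime_pow_eq_one_iff]
  constructor
  · rintro ⟨⟨j', rfl, hdvd⟩, hmem⟩
    exact ⟨j', rfl, (hnotMem j').1 hmem, hdvd⟩
  · rintro ⟨j', rfl, hp, hdvd⟩
    exact ⟨⟨j', rfl, hdvd⟩, (hnotMem j').2 hp⟩

theorem card_subtype_eq_mul (h : IsM3Pair p f d c n a b) {m : ℕ} (hm : m ≤ n)
    {P : G → Prop} {Q : ℕ → Prop} {R : ℕ → ℕ → Prop} [DecidablePred Q] [∀ j, DecidablePred (R j)]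
    (hP : ∀ j i, P (b ^ j * a ^ i) ↔ ∃ j', j = p ^ m * j' ∧ Q j' ∧ R j' i) {K : ℕ}
    (hK : ∀ j, Q j → Nat.count (R j) (p ^ (d + c)) = K) :
    Nat.card {g // P g} = Nat.count Q (p ^ (n - m)) * K := by
  have hlt {j : ℕ} : p ^ m * j < p ^ n ↔ j < p ^ (n - m) := by
    rw [← Nat.add_sub_cancel' hm, pow_add, Nat.mul_lt_mul_left (pow_pos h.prime.pos m),
      Nat.add_sub_cancel_left]
  set S : Finset (Σ _ : ℕ, ℕ) :=
    {j ∈ range (p ^ (n - m)) | Q j}.sigma fun j => {i ∈ range (p ^ (d + c)) | R j i} with hS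
  have hmem (x : Σ _ : ℕ, ℕ) :
      x ∈ S ↔ (x.1 < p ^ (n - m) ∧ Q x.1) ∧ x.2 < p ^ (d + c) ∧ R x.1 x.2 := by
    simp [hS, mem_sigma]
  have himage : {g | P g} = (fun x : Σ _ : ℕ, ℕ => b ^ (p ^ m * x.1) * a ^ x.2) '' S := by
    ext g
    refine ⟨fun hg => ?_, ?_⟩
    · obtain ⟨j, hj, i, hi, rfl⟩ := h.exists_lt_and_eq g
      obtain ⟨j', rfl, hQ, hR⟩ := (hP j i).1 hg
      exact ⟨⟨j', i⟩, (hmem _).2 ⟨⟨hlt.1 hj, hQ⟩, hi, hR⟩, rfl⟩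
    · rintro ⟨x, hx, rfl⟩
      obtain ⟨⟨-, hQ⟩, -, hR⟩ := (hmem x).1 hx
      exact (hP _ _).2 ⟨x.1, rfl, hQ, hR⟩
  have hinj : Set.InjOn (fun x : Σ _ : ℕ, ℕ => b ^ (p ^ m * x.1) * a ^ x.2) S := by
    rintro ⟨j, i⟩ hx ⟨j', i'⟩ hx' heq
    obtain ⟨⟨hj, -⟩, hi, -⟩ := (hmem _).1 hx
    obtain ⟨⟨hj', -⟩, hi', -⟩ := (hmem _).1 hx'
    obtain ⟨hjj', rfl⟩ := h.eq_of_lt_of_eq (hlt.2 hj) (hlt.2 hj') hi hi' heq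
    obtain rfl := Nat.eq_of_mul_eq_mul_left (pow_pos h.prime.pos m) hjj'
    rfl
  calc Nat.card {g // P g} = #S := by
        rw [← Set.coe_ofPred, Nat.card_coe_set_eq, himage, hinj.ncard_image,
          Set.ncard_coe_finset]
    _ = #{j ∈ range (p ^ (n - m)) | Q j} * K := by
        rw [hS, card_sigma]
        refine sum_const_nat fun j hj => ?_
        rw [← Nat.count_eq_card_filter_range, hK j (mem_filter.1 hj).2]
    _ = Nat.count Q (p ^ (n - m)) * K := by rw [Nat.count_eq_card_filter_range]

theorem card_eq (h : IsM3Pair p f d c n a b) : Nat.card G = p ^ (n + (d + c)) := by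
  have hcard := h.card_subtype_eq_mul (P := fun _ => True) (Q := fun _ => True)
    (R := fun _ _ => True) (Nat.zero_le n) (by simp) fun _ _ => Nat.count_true _
  rw [Nat.count_true, tsub_zero, ← pow_add] at hcard
  exact (Nat.card_congr (Equiv.subtypeUnivEquiv fun _ => trivial)).symm.trans hcard

theorem finite (h : IsM3Pair p f d c n a b) : Finite G :=
  Nat.finite_of_card_ne_zero (h.card_eq ▸ (pow_pos h.prime.pos _).ne')

theorem isExactBicyclicPair_iff (h : IsM3Pair p f d c n a b) {α β : G} :
    IsExactBicyclicPair (p ^ d) (p ^ (n + c)) α β ↔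
      (orderOf α = p ^ d ∧ Subgroup.zpowers α ⊓ Subgroup.zpowers a = ⊥) ∧
        orderOf β = p ^ (n + c) := by
  have := h.finite
  have hinf (hβ : orderOf β = p ^ (n + c)) :
      Subgroup.zpowers α ⊓ Subgroup.zpowers β = ⊥ ↔
        Subgroup.zpowers α ⊓ Subgroup.zpowers a = ⊥ := by
    obtain ⟨l, k, rfl⟩ := h.exists_eq β
    exact h.inf_zpowers_normalForm_eq_bot_iff (h.orderOf_normalForm_eq_iff.1 hβ)
  rw [isExactBicyclicPair_iff_of_card_eq (by rw [h.card_eq, ← pow_add]; congr 1; ring),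
    and_assoc, and_comm (a := orderOf β = _)]
  exact and_congr_right fun _ => and_congr_left hinf

theorem card_orderOf_eq_and_inf_zpowers_eq_bot (h : IsM3Pair p f d c n a b) :
    Nat.card {α : G // orderOf α = p ^ d ∧ Subgroup.zpowers α ⊓ Subgroup.zpowers a = ⊥} =
      p ^ (d - 1) * (p - 1) * p ^ d := by
  have hcount (j : ℕ) : Nat.count (fun i => p ^ c ∣ j + i) (p ^ (d + c)) = p ^ d := by
    have hiff (i : ℕ) : p ^ c ∣ j + i ↔ i ≡ (p ^ c - 1) * j [MOD p ^ c] := by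
      have hj : (p ^ c - 1) * j + j = p ^ c * j := by
        rw [← Nat.succ_mul, Nat.succ_eq_add_one, Nat.sub_add_cancel (pow_pos h.prime.pos c)]
      rw [← Nat.ModEq.add_iff_right (Nat.ModEq.refl (n := p ^ c) j), hj, Nat.ModEq,
        Nat.mul_mod_right, ← Nat.dvd_iff_mod_eq_zero, add_comm]
    simp_rw [hiff]
    rw [count_modEq_pow h.prime.pos (Nat.le_add_left c d), Nat.add_sub_cancel]
  have hf := h.f_lt_d
  rw [h.card_subtype_eq_mul (Nat.sub_le n d) (fun _ _ => h.orderOf_eq_and_inf_zpowers_eq_bot_iff)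
    fun j _ => hcount j, Nat.sub_sub_self h.d_lt_n.le, count_not_dvd_prime_pow h.prime (by lia)]

theorem card_orderOf_eq (h : IsM3Pair p f d c n a b) :
    Nat.card {β : G // orderOf β = p ^ (n + c)} = p ^ (n - 1) * (p - 1) * p ^ (d + c) := by
  have hn := h.d_lt_n
  rw [h.card_subtype_eq_mul (Q := fun l => ¬p ∣ l) (R := fun _ _ => True) (Nat.zero_le n)
    (by simp [h.orderOf_normalForm_eq_iff]) fun _ _ => Nat.count_true _, tsub_zero,
    count_not_dvd_prime_pow h.prime (by lia)]

theorem card_isExactBicyclicPair (h : IsM3Pair p f d c n a b) :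
    Nat.card {x : G × G // IsExactBicyclicPair (p ^ d) (p ^ (n + c)) x.1 x.2} =
      p ^ (d - 1) * (p - 1) * p ^ d * (p ^ (n - 1) * (p - 1) * p ^ (d + c)) := by
  rw [← h.card_orderOf_eq_and_inf_zpowers_eq_bot, ← h.card_orderOf_eq, ← Nat.card_prod]
  refine Nat.card_congr (.trans ?_ Equiv.subtypeProdEquivProd)
  exact Equiv.subtypeEquivRight fun _ => h.isExactBicyclicPair_iff

theorem exists_mulAut (h : IsM3Pair p f d c n a b) {x y : G} (hpow : y ^ p ^ n = x ^ p ^ d)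
    (hcomm : x * y = y * x ^ (1 + p ^ f)) (ha : a ∈ Subgroup.closure {x, y})
    (hb : b ∈ Subgroup.closure {x, y}) : ∃ φ : MulAut G, φ b = y ∧ φ a = x := by
  have := h.finite
  have hx : x ^ p ^ (d + c) = 1 := by
    rw [pow_add, pow_mul, ← hpow, ← pow_mul, ← pow_add, h.pow_prime_pow_eq_one]
  obtain ⟨φ, rfl, rfl⟩ := h.exists_hom x y hx hpow hcomm
  have hrange : φ.range = ⊤ := by
    have hle : Subgroup.closure {φ a, φ b} ≤ φ.range := by
      simp [Subgroup.closure_le, Set.insert_subset_iff]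
    rw [eq_top_iff, ← h.closure_eq_top, Subgroup.closure_le, Set.insert_subset_iff,
      Set.singleton_subset_iff]
    exact ⟨hle ha, hle hb⟩
  have hsurj : Function.Surjective φ := MonoidHom.range_eq_top.1 hrange
  exact ⟨MulEquiv.ofBijective φ ⟨Finite.injective_iff_surjective.2 hsurj, hsurj⟩, rfl, rfl⟩

theorem prime_pow_dvd_of_normalForm_mul_comm (h : IsM3Pair p f d c n a b) {J i l k : ℕ}
    (heq : (b ^ J * a ^ i) * (b ^ l * a ^ k) =
      (b ^ l * a ^ k) * (b ^ J * a ^ i) ^ (1 + p ^ f)) : p ^ (n - f) ∣ J := by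
  obtain ⟨hfd, hdn⟩ := And.intro h.f_lt_d h.d_lt_n
  rw [normalForm_pow h.mul_eq_mul_pow, normalForm_mul h.mul_eq_mul_pow,
      normalForm_mul h.mul_eq_mul_pow] at heq
  have hJ : 0 ≡ J * p ^ f [MOD p ^ n] := by
    refine Nat.ModEq.add_left_cancel' (J + l) ?_
    convert h.modEq_of_eq heq using 1 <;> ring
  refine Nat.dvd_of_mul_dvd_mul_right (pow_pos h.prime.pos f) ?_
  rw [← pow_add, Nat.sub_add_cancel (by lia)]
  exact Nat.modEq_zero_iff_dvd.1 hJ.symm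

theorem normalForm_mul_comm_iff (h : IsM3Pair p f d c n a b) {J i l k : ℕ} :
    (b ^ J * a ^ i) * (b ^ l * a ^ k) = (b ^ l * a ^ k) * (b ^ J * a ^ i) ^ (1 + p ^ f) ↔
      ∃ j, J = p ^ (n - f) * j ∧
        i * (1 + p ^ f) ^ l + k ≡
          k * (1 + p ^ f) ^ J + (p ^ d * j + i * (1 + p ^ f)) [MOD p ^ (d + c)] := by
  obtain ⟨hcf, hfd, hdn⟩ := And.intro h.c_le_f (And.intro h.f_lt_d h.d_lt_n)
  have hiff (j : ℕ) (hJ : J = p ^ (n - f) * j) :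
      (b ^ J * a ^ i) * (b ^ l * a ^ k) = (b ^ l * a ^ k) * (b ^ J * a ^ i) ^ (1 + p ^ f) ↔
        i * (1 + p ^ f) ^ l + k ≡
          k * (1 + p ^ f) ^ J + (p ^ d * j + i * (1 + p ^ f)) [MOD p ^ (d + c)] := by
    have hJf : J * p ^ f = p ^ n * j := by
      rw [hJ, mul_right_comm, ← pow_add, Nat.sub_add_cancel (by lia)]
    have hpow : (b ^ J * a ^ i) ^ p ^ f = a ^ (p ^ d * j + i * p ^ f) := by
      rw [h.normalForm_pow_prime_pow (hJ ▸ dvd_mul_right _ j) (by lia), hJf, h.pow_mul_right,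
        ← pow_add]
    rw [pow_add, pow_one, hpow, ← mul_assoc (b ^ l * a ^ k), normalForm_mul h.mul_eq_mul_pow,
      normalForm_mul h.mul_eq_mul_pow, mul_assoc, ← pow_add, add_comm l, mul_right_inj,
      h.pow_eq_pow_iff]
    ring_nf
  constructor
  · intro heq
    obtain ⟨j, hJ⟩ := h.prime_pow_dvd_of_normalForm_mul_comm heq
    exact ⟨j, hJ, (hiff j hJ).1 heq⟩
  · rintro ⟨j, hJ, hmod⟩
    exact (hiff j hJ).2 hmod

theorem normalForm_pow_eq_pow_iff (h : IsM3Pair p f d c n a b) {j i l k : ℕ} :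
    (b ^ l * a ^ k) ^ p ^ n = (b ^ (p ^ (n - f) * j) * a ^ i) ^ p ^ d ↔
      l + p ^ (n - d) * k ≡ p ^ (d - f) * j + i [MOD p ^ c] := by
  obtain ⟨hcf, hfd, hdn⟩ := And.intro h.c_le_f (And.intro h.f_lt_d h.d_lt_n)
  have hexp : p ^ (n - f) * p ^ d = p ^ n * p ^ (d - f) := by
    rw [← pow_add, ← pow_add]
    congr 1
    lia
  have hn : p ^ n = p ^ d * p ^ (n - d) := by rw [← pow_add, Nat.add_sub_cancel' hdn.le]
  have hleft : (b ^ l * a ^ k) ^ p ^ n = a ^ (p ^ d * (l + p ^ (n - d) * k)) := by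
    rw [h.normalForm_pow_prime_pow (s := 0) (by simp) (by lia), mul_comm l, h.pow_mul_right,
      ← pow_add, hn]
    ring_nf
  have hright : (b ^ (p ^ (n - f) * j) * a ^ i) ^ p ^ d =
      a ^ (p ^ d * (p ^ (d - f) * j + i)) := by
    rw [h.normalForm_pow_prime_pow (s := 0) (by simp) (by lia), mul_right_comm, hexp, mul_assoc,
      h.pow_mul_right, ← pow_add]
    ring_nf
  rw [hleft, hright, h.pow_eq_pow_iff, pow_add,
    Nat.ModEq.mul_left_cancel_iff' (pow_pos h.prime.pos d).ne']

theorem modEq_of_mulAut (h : IsM3Pair p f d c n a b) {φ : MulAut G} {J i l k : ℕ}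
    (hb : φ b = b ^ l * a ^ k) (ha : φ a = b ^ J * a ^ i) :
    ∃ j, J = p ^ (n - f) * j ∧
      i * (1 + p ^ f) ^ l + k ≡
        k * (1 + p ^ f) ^ J + (p ^ d * j + i * (1 + p ^ f)) [MOD p ^ (d + c)] ∧
      l + p ^ (n - d) * k ≡ p ^ (d - f) * j + i [MOD p ^ c] := by
  have hcomm := congrArg φ h.mul_eq_mul_pow
  have hpow := congrArg φ h.pow_right
  simp only [map_mul, map_pow, ha, hb] at hcomm hpow
  obtain ⟨j, rfl, hmod⟩ := h.normalForm_mul_comm_iff.1 hcomm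
  exact ⟨j, rfl, hmod, h.normalForm_pow_eq_pow_iff.1 hpow⟩

theorem exists_mulAut_of_modEq (h : IsM3Pair p f d c n a b) {j i l k : ℕ}
    (hcomm : i * (1 + p ^ f) ^ l + k ≡
      k * (1 + p ^ f) ^ (p ^ (n - f) * j) + (p ^ d * j + i * (1 + p ^ f)) [MOD p ^ (d + c)])
    (hpow : l + p ^ (n - d) * k ≡ p ^ (d - f) * j + i [MOD p ^ c])
    (hi : ¬p ∣ i)
    (hb : b ∈ Subgroup.closure {b ^ (p ^ (n - f) * j) * a ^ i, b ^ l * a ^ k}) :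
    ∃ φ : MulAut G, φ b = b ^ l * a ^ k ∧ φ a = b ^ (p ^ (n - f) * j) * a ^ i := by
  refine h.exists_mulAut (h.normalForm_pow_eq_pow_iff.2 hpow)
    (h.normalForm_mul_comm_iff.2 ⟨j, rfl, hcomm⟩) ?_ hb
  refine mem_of_pow_mem_of_coprime (i := i) ?_ ?_
  · exact h.orderOf_left ▸ h.prime.coprime_pow_of_not_dvd hi
  · refine (Subgroup.mul_mem_cancel_left _ (pow_mem hb (p ^ (n - f) * j))).1 ?_
    exact Subgroup.subset_closure (Set.mem_insert _ _)

theorem exists_mulAut_fixing_right_iff (h : IsM3Pair p f d c n a b) {J i : ℕ} :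
    (∃ φ : MulAut G, φ b = b ∧ φ a = b ^ J * a ^ i) ↔
      ∃ j, J = p ^ (n - f + c) * j ∧ i ≡ 1 [MOD p ^ c] := by
  have hexp : p ^ (n - f + c) = p ^ (n - f) * p ^ c := pow_add p _ _
  have hdvd {j : ℕ} (hj : p ^ c ∣ j) : p ^ (d - f) * j + i ≡ i [MOD p ^ c] := by
    simpa using (Nat.modEq_zero_iff_dvd.2 (hj.mul_left (p ^ (d - f)))).add_right i
  constructor
  · rintro ⟨φ, hb, ha⟩
    obtain ⟨j, rfl, hcomm, hpow⟩ := h.modEq_of_mulAut (l := 1) (k := 0) (by simpa using hb) ha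
    have hj : p ^ c ∣ j := by
      have hzero : p ^ d * j ≡ 0 [MOD p ^ d * p ^ c] := by
        refine Nat.ModEq.add_right_cancel' (i * (1 + p ^ f)) ?_
        simpa [pow_add] using hcomm.symm
      exact Nat.dvd_of_mul_dvd_mul_left (pow_pos h.prime.pos d) (Nat.modEq_zero_iff_dvd.1 hzero)
    have hi : i ≡ 1 [MOD p ^ c] := by simpa using (hdvd hj).symm.trans hpow.symm
    obtain ⟨j', rfl⟩ := hj
    exact ⟨j', by rw [hexp, mul_assoc], hi⟩
  · rintro ⟨j, rfl, hi⟩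
    rw [hexp, mul_assoc]
    have hcomm : i * (1 + p ^ f) ≡ p ^ d * (p ^ c * j) + i * (1 + p ^ f) [MOD p ^ (d + c)] := by
      simp [Nat.ModEq, pow_add, ← mul_assoc]
    simpa using h.exists_mulAut_of_modEq (l := 1) (k := 0) (j := p ^ c * j) (i := i)
      (by simpa using hcomm) (by simpa using (hi.symm.trans (hdvd (dvd_mul_right _ j)).symm))
      (not_dvd_of_modEq_one h.prime h.c_pos.ne' hi)
      (Subgroup.subset_closure (by simp))

theorem exists_mulAut_apply_right_eq_mul_pow (h : IsM3Pair p f d c n a b) (k : ℕ) :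
    ∃ φ : MulAut G, φ b = b * a ^ k := by
  have hi : 1 + p ^ (n - d) * k ≡ 1 [MOD p ^ (n - d)] := by simp [Nat.ModEq]
  have hpi := not_dvd_of_modEq_one h.prime (Nat.sub_pos_of_lt h.d_lt_n).ne' hi
  have ha : a ∈ Subgroup.closure {a ^ (1 + p ^ (n - d) * k), b * a ^ k} :=
    mem_of_pow_mem_of_coprime
      (h.orderOf_left ▸ h.prime.coprime_pow_of_not_dvd hpi)
      (Subgroup.subset_closure (Set.mem_insert _ _))
  have hb : b ∈ Subgroup.closure {a ^ (1 + p ^ (n - d) * k), b * a ^ k} :=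
    (Subgroup.mul_mem_cancel_right _ (pow_mem ha k)).1 (Subgroup.subset_closure (by simp))
  obtain ⟨φ, hφ, -⟩ := h.exists_mulAut_of_modEq (j := 0) (i := 1 + p ^ (n - d) * k) (l := 1)
    (k := k) (by simp [Nat.ModEq, add_comm k]) (by simp [Nat.ModEq]) hpi (by simpa using hb)
  exact ⟨φ, by simpa using hφ⟩

theorem modEq_one_of_mulAut (h : IsM3Pair p f d c n a b) {φ : MulAut G} {l k : ℕ}
    (hb : φ b = b ^ l * a ^ k) : l ≡ 1 [MOD p ^ (d - f)] := by
  obtain ⟨hfd, hdn⟩ := And.intro h.f_lt_d h.d_lt_n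
  obtain ⟨J, i, ha⟩ := h.exists_eq (φ a)
  obtain ⟨j, rfl, hcomm, hpow⟩ := h.modEq_of_mulAut hb ha
  have hpl : ¬p ∣ l := by
    rw [← h.orderOf_normalForm_eq_iff (k := k), ← hb, MulEquiv.orderOf_eq]
    simpa using (h.orderOf_normalForm_eq_iff (l := 1) (k := 0)).2 h.prime.not_dvd_one
  have hpi : ¬p ∣ i := by
    have hmod := hpow.of_dvd (dvd_pow_self p h.c_pos.ne')
    rwa [← Nat.dvd_add_right ((dvd_pow_self p (Nat.sub_pos_of_lt hfd).ne').mul_right j),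
      ← hmod.dvd_iff dvd_rfl,
      Nat.dvd_add_left ((dvd_pow_self p (Nat.sub_pos_of_lt hdn).ne').mul_right k)]
  have hd : p ^ d = p ^ (f + (d - f)) := by rw [Nat.add_sub_cancel' hfd.le]
  have hone : (1 + p ^ f) ^ (p ^ (n - f) * j) ≡ 1 [MOD p ^ d] := by
    rw [hd]
    refine (one_add_prime_pow_pow_modEq_iff h.prime h.odd h.f_ne_zero (m := 0)).2 ?_
    exact Nat.modEq_zero_iff_dvd.2 ((pow_dvd_pow p (by lia)).mul_right j)
  have hconj : k + i * (1 + p ^ f) ^ l ≡ k + i * (1 + p ^ f) ^ 1 [MOD p ^ d] :=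
    calc k + i * (1 + p ^ f) ^ l
        ≡ k * (1 + p ^ f) ^ (p ^ (n - f) * j) + (p ^ d * j + i * (1 + p ^ f)) [MOD p ^ d] := by
          rw [add_comm k]
          exact hcomm.of_dvd (pow_dvd_pow p (Nat.le_add_right d c))
      _ ≡ k * 1 + (0 + i * (1 + p ^ f)) [MOD p ^ d] :=
          (hone.mul_left k).add ((Nat.modEq_zero_iff_dvd.2 (dvd_mul_right _ j)).add_right _)
      _ = k + i * (1 + p ^ f) ^ 1 := by rw [mul_one, zero_add, pow_one]
  refine (one_add_prime_pow_pow_modEq_iff h.prime h.odd h.f_ne_zero).1 (hd ▸ ?_)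
  refine Nat.ModEq.cancel_left_of_coprime ?_ (Nat.ModEq.add_left_cancel' k hconj)
  exact (h.prime.coprime_iff_not_dvd.2 hpi).pow_left d

-- With `r = 1 + p ^ f` and `r ^ l = r + p ^ d * w`, the automorphism sends `a` to
-- `b ^ (p ^ (n - f) * i * w) * a ^ i`, where `i * (1 + p ^ (d - f) * w) ≡ l [MOD p ^ c]`.
theorem exists_mulAut_apply_right_eq_pow (h : IsM3Pair p f d c n a b) {l : ℕ}
    (hl : l ≡ 1 [MOD p ^ (d - f)]) : ∃ φ : MulAut G, φ b = b ^ l := by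
  have hdf := Nat.sub_pos_of_lt h.f_lt_d
  have hpl := not_dvd_of_modEq_one h.prime hdf.ne' hl
  have hl0 : l ≠ 0 := by rintro rfl; exact hpl (dvd_zero p)
  obtain ⟨w, hw⟩ : ∃ w, (1 + p ^ f) ^ l = (1 + p ^ f) ^ 1 + p ^ d * w := by
    rw [← Nat.modEq_iff_exists_eq_add (Nat.pow_le_pow_right (by lia) (Nat.pos_of_ne_zero hl0)),
      ← Nat.add_sub_cancel' h.f_lt_d.le]
    exact ((one_add_prime_pow_pow_modEq_iff h.prime h.odd h.f_ne_zero).2 hl).symm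
  have hunit : ¬p ∣ 1 + p ^ (d - f) * w :=
    not_dvd_of_modEq_one h.prime hdf.ne' (by simp [Nat.ModEq])
  obtain ⟨i, -, hi⟩ := Nat.exists_mul_mod_eq_of_coprime l
    (h.prime.coprime_pow_of_not_dvd hunit) (pow_pos h.prime.pos c).ne'
  have hpi : ¬p ∣ i := fun hdvd =>
    hpl ((Nat.ModEq.dvd_iff hi (dvd_pow_self p h.c_pos.ne')).1 (hdvd.mul_left _))
  have hb : b ∈ Subgroup.closure {b ^ (p ^ (n - f) * (i * w)) * a ^ i, b ^ l} := by
    refine mem_of_pow_mem_of_coprime (i := l) ?_ (Subgroup.subset_closure (by simp))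
    exact Nat.Coprime.coprime_dvd_right (orderOf_dvd_of_pow_eq_one (h.pow_prime_pow_eq_one b))
      (h.prime.coprime_pow_of_not_dvd hpl)
  have hcomm : i * (1 + p ^ f) ^ l ≡ p ^ d * (i * w) + i * (1 + p ^ f) [MOD p ^ (d + c)] := by
    rw [hw, pow_one, mul_add, add_comm (i * (1 + p ^ f)), mul_left_comm]
  have hpow : l ≡ p ^ (d - f) * (i * w) + i [MOD p ^ c] := by
    convert Nat.ModEq.symm hi using 1
    ring
  obtain ⟨φ, hφ, -⟩ := h.exists_mulAut_of_modEq (l := l) (k := 0) (by simpa using hcomm)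
    (by simpa using hpow) hpi (by simpa using hb)
  exact ⟨φ, by simpa using hφ⟩

theorem exists_mulAut_apply_right_eq_iff (h : IsM3Pair p f d c n a b) {l k : ℕ} :
    (∃ φ : MulAut G, φ b = b ^ l * a ^ k) ↔ l ≡ 1 [MOD p ^ (d - f)] := by
  refine ⟨fun ⟨φ, hφ⟩ => h.modEq_one_of_mulAut hφ, fun hl => ?_⟩
  have hpl := not_dvd_of_modEq_one h.prime (Nat.sub_pos_of_lt h.f_lt_d).ne' hl
  set S := ∑ u ∈ range l, (1 + p ^ f) ^ u
  have hS : S ≡ l [MOD p ^ f] := geom_sum_modEq (by simp [Nat.ModEq]) l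
  have hpS : ¬p ∣ S := by rwa [(hS.of_dvd (dvd_pow_self p h.f_ne_zero)).dvd_iff dvd_rfl]
  obtain ⟨m, -, hm⟩ := Nat.exists_mul_mod_eq_of_coprime k
    (h.prime.coprime_pow_of_not_dvd hpS) (pow_pos h.prime.pos (d + c)).ne'
  obtain ⟨φ, hφ⟩ := h.exists_mulAut_apply_right_eq_mul_pow m
  obtain ⟨ψ, hψ⟩ := h.exists_mulAut_apply_right_eq_pow hl
  refine ⟨φ * ψ, ?_⟩
  calc (φ * ψ) b = (b ^ 1 * a ^ m) ^ l := by rw [MulAut.mul_apply, hψ, map_pow, hφ, pow_one]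
    _ = b ^ l * a ^ (m * S) := by rw [normalForm_pow h.mul_eq_mul_pow, one_mul, pow_one]
    _ = b ^ l * a ^ k := by rw [mul_comm, h.pow_eq_pow_iff.2 hm]

theorem card_mulAut (h : IsM3Pair p f d c n a b) : Nat.card (MulAut G) = p ^ (n + d + 2 * f) := by
  obtain ⟨hcf, hfd, hdn⟩ := And.intro h.c_le_f (And.intro h.f_lt_d h.d_lt_n)
  have horbit : Nat.card {y // ∃ φ : MulAut G, φ b = y} = p ^ (n - (d - f)) * p ^ (d + c) := by
    rw [h.card_subtype_eq_mul (Q := (· ≡ 1 [MOD p ^ (d - f)])) (R := fun _ _ => True)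
      (Nat.zero_le n) (by simp [h.exists_mulAut_apply_right_eq_iff]) fun _ _ => Nat.count_true _,
      tsub_zero, count_modEq_pow h.prime.pos (by lia)]
  have hstab : Nat.card {x // ∃ φ : MulAut G, φ b = b ∧ φ a = x} = p ^ (f - c) * p ^ d := by
    rw [h.card_subtype_eq_mul (m := n - f + c) (Q := fun _ => True)
      (R := fun _ i => i ≡ 1 [MOD p ^ c]) (by lia) (by simp [h.exists_mulAut_fixing_right_iff])
      fun _ _ => count_modEq_pow h.prime.pos (Nat.le_add_left c d) 1, Nat.count_true,
      Nat.add_sub_cancel]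
    congr 2
    lia
  rw [card_mulAut_eq_mul h.closure_eq_top, horbit, hstab, ← pow_add, ← pow_add, ← pow_add]
  congr 1
  lia

end IsM3Pair

/-- For `G = M₃(p,d,e,h,f)` with `h - d ≤ f < d < h < e`, the number of
orbits of `Aut(G)` acting componentwise on the exact `(p^d,p^e)`-bicyclic pairs of `G`
equals `p^(d+h-2(f+1))(p-1)²`. -/
theorem stmt_19 (p d e h f : ℕ) (hp : p.Prime) (hodd : Odd p)
    (hf : 0 < f) (hhd : h - d ≤ f) (hfd : f < d) (hdh : d < h) (hhe : h < e) :
    Nat.card (Quotient (bicyclicPairSetoid (M3 p d e h f) (p ^ d) (p ^ e))) =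
      p ^ (d + h - 2 * (f + 1)) * (p - 1) ^ 2 := by
  have hM3 := isM3Pair_M3 hp hodd hhd hfd hdh hhe
  have hpairs := hM3.card_isExactBicyclicPair
  have he : d + e - h + (h - d) = e := by lia
  rw [he, card_isExactBicyclicPair_eq_mul, hM3.card_mulAut] at hpairs
  have hexp : p ^ (d - 1) * p ^ d * (p ^ (d + e - h - 1) * p ^ (d + (h - d))) =
      p ^ (d + h - 2 * (f + 1)) * p ^ (d + e - h + d + 2 * f) := by
    simp only [← pow_add]
    congr 1
    lia
  refine Nat.eq_of_mul_eq_mul_right (pow_pos hp.pos (d + e - h + d + 2 * f)) ?_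
  rw [hpairs, mul_right_comm _ ((p - 1) ^ 2), ← hexp]
  ring
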